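/- Let (fₙ) be the Fibonacci sequence, i.e. f₁ = 1, f₂ = 1 and fₙ = f_{n−1} + f_{n−2} for n ≥ 3. Then the statistically characterized subgroup t^s_{(fₙ)}(𝕋) is uncountable. -/

import Mathlib

open Filter Topology

noncomputable section

/-- The circle group `𝕋 = ℝ/ℤ`. -/
abbrev Circle1 : Type := AddCircle (1 : ℝ)

/-- A set of naturals has natural density zero. -/
def DensityZero (A : Set ℕ) : Prop :=
  Tendsto (fun n : ℕ => ((A ∩ Set.Icc 1 n).ncard : ℝ) / n) atTop (𝓝 0)

/-- Statistical convergence to `0` of a sequence in the circle. -/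
def StatTendstoZero (x : ℕ → Circle1) : Prop :=
  ∀ ε : ℝ, 0 < ε → DensityZero {n : ℕ | ε ≤ ‖x n‖}

/-- The characterized subgroup `t_(a_n)(𝕋)`. -/
def charSet (a : ℕ → ℤ) : Set Circle1 :=
  {x : Circle1 | Tendsto (fun n : ℕ => a n • x) atTop (𝓝 0)}

/-- The statistically characterized subgroup `t^s_(a_n)(𝕋)`. -/
def statCharSet (a : ℕ → ℤ) : Set Circle1 :=
  {x : Circle1 | StatTendstoZero (fun n : ℕ => a n • x)}

namespace CF

/-- Gauss-map orbit of `α`: `G α 0 = α`, `G α (n+1) = {1 / G α n}`. -/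
def G (α : ℝ) : ℕ → ℝ
  | 0 => α
  | n + 1 => Int.fract (G α n)⁻¹

/-- The partial quotients of the regular continued fraction `α = [0; a 1, a 2, …]`
(with the convention `a 0 = 0`). -/
def a (α : ℝ) : ℕ → ℕ
  | 0 => 0
  | n + 1 => ⌊(G α n)⁻¹⌋₊

/-- Denominators of the convergents of the continued fraction of `α`. -/
def q (α : ℝ) : ℕ → ℕ
  | 0 => 1
  | 1 => a α 1
  | (n + 2) => a α (n + 2) * q α (n + 1) + q α n

/-- Numerators of the convergents of the continued fraction of `α`. -/
def p (α : ℝ) : ℕ → ℕ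
  | 0 => 0
  | 1 => 1
  | (n + 2) => a α (n + 2) * p α (n + 1) + p α n

/-- `θ n = q n * α - p n`. -/
def θ (α : ℝ) (n : ℕ) : ℝ := (q α n : ℝ) * α - (p α n : ℝ)

end CF

open CF

/-!
Let `u` be an integer sequence with the Fibonacci recurrence, and let `φ`, `ψ` be the golden ratio
and its conjugate. Reduce `u n * ψ ^ m` modulo `1`. For `n ≤ m` it is already small, since `u n`
grows at most like `φ ^ n = |ψ| ^ (-n)`. For `m ≤ n`, substituting `ψ ^ m = fib (m + 1) - φ * fib m`
turns it into `fib m * (u (n + 1) - φ * u n)`, a constant times `fib m * ψ ^ n`. So `u n • ψ ^ m` is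
`O(|ψ| ^ |n - m|)` in the circle.

Hence, for a set `A` of density zero, `x = ∑ m ∈ A, ψ ^ (2 * m)` satisfies `‖u n • x‖ < ε` unless
`n` lies within a bounded distance of `{2 * m | m ∈ A}`, and such `n` have density zero. Since
`ψ ^ 2 < 1 / 2`, different sets `A` give different sums, and there are uncountably many sets of
nonzero squares.
-/

lemma not_countable_powerset {α : Type*} {s : Set α} (hs : s.Infinite) :
    ¬ (𝒫 s).Countable := by
  rw [← Cardinal.le_aleph0_iff_set_countable, Cardinal.mk_powerset, not_le]
  calc Cardinal.aleph0 < 2 ^ Cardinal.aleph0 := Cardinal.cantor _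
    _ ≤ 2 ^ Cardinal.mk s :=
      Cardinal.power_le_power_left two_ne_zero (Cardinal.infinite_iff.1 hs.to_subtype)

lemma summable_pow_natAbs {r : ℝ} (h0 : 0 ≤ r) (h1 : r < 1) :
    Summable fun k : ℤ => r ^ k.natAbs := by
  rw [summable_int_iff_summable_nat_and_neg]
  constructor <;> simpa using summable_geometric_of_lt_one h0 h1

section DensityZero

lemma DensityZero.of_ncard_le {A B : Set ℕ} (hB : DensityZero B) (C D : ℕ)
    (h : ∀ N, (A ∩ Set.Icc 1 N).ncard ≤ C * ((B ∩ Set.Icc 1 N).ncard + D)) : DensityZero A := by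
  have hlim := (hB.add (tendsto_const_div_atTop_nhds_zero_nat (D : ℝ))).const_mul (C : ℝ)
  rw [add_zero, mul_zero] at hlim
  refine squeeze_zero (fun N => by positivity) (fun N => ?_) hlim
  rw [← add_div, ← mul_div_assoc]
  gcongr
  exact_mod_cast h N

lemma DensityZero.mono {A B : Set ℕ} (hB : DensityZero B) (hAB : A ⊆ B) : DensityZero A :=
  hB.of_ncard_le 1 0 fun N => by
    simpa using Set.ncard_le_ncard (Set.inter_subset_inter_left (Set.Icc 1 N) hAB)

lemma ncard_inter_Iic_add_le (E : Set ℕ) (N K : ℕ) :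
    (E ∩ Set.Iic (N + K)).ncard ≤ (E ∩ Set.Icc 1 N).ncard + (K + 1) := by
  have hsub : E ∩ Set.Iic (N + K) ⊆ E ∩ Set.Icc 1 N ∪ insert 0 (Set.Ioc N (N + K)) := by
    rintro m ⟨hm, hmN : m ≤ N + K⟩
    simp only [Set.mem_union, Set.mem_inter_iff, Set.mem_Icc, Set.mem_insert_iff, Set.mem_Ioc]
    grind
  have hK : (Set.Ioc N (N + K)).ncard = K := by
    rw [← Finset.coe_Ioc, Set.ncard_coe_finset, Nat.card_Ioc, Nat.add_sub_cancel_left]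
  grw [Set.ncard_le_ncard hsub, Set.ncard_union_le, Set.ncard_insert_le, hK]

lemma DensityZero.setOf_exists_sub_mem {E : Set ℕ} (hE : DensityZero E) {e : ℕ → ℕ}
    (he : ∀ m, m ≤ e m) (s : Finset ℤ) :
    DensityZero {n : ℕ | ∃ m ∈ E, (n : ℤ) - e m ∈ s} := by
  obtain ⟨K, hK⟩ : ∃ K : ℕ, ∀ k ∈ s, k.natAbs ≤ K :=
    ⟨s.sup Int.natAbs, fun k hk => Finset.le_sup (f := Int.natAbs) hk⟩
  refine hE.of_ncard_le s.card (K + 1) fun N => ?_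
  have hsub : {n : ℕ | ∃ m ∈ E, (n : ℤ) - e m ∈ s} ∩ Set.Icc 1 N ⊆
      (fun p : ℤ × ℕ => (p.1 + e p.2).toNat) '' ((s : Set ℤ) ×ˢ (E ∩ Set.Iic (N + K))) := by
    rintro n ⟨⟨m, hmE, hms⟩, -, hnN⟩
    refine ⟨(n - e m, m), ⟨hms, hmE, ?_⟩, by simp⟩
    have := hK _ hms
    have := he m
    simp only [Set.mem_Iic]
    omega
  have hfin : ((s : Set ℤ) ×ˢ (E ∩ Set.Iic (N + K))).Finite :=
    s.finite_toSet.prod ((Set.finite_Iic _).inter_of_right E)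
  grw [Set.ncard_le_ncard hsub (hfin.image _), Set.ncard_image_le hfin, Set.ncard_prod,
    Set.ncard_coe_finset, ncard_inter_Iic_add_le]

lemma densityZero_range_of_succ_sq_le {e : ℕ → ℕ} (he : ∀ j, (j + 1) ^ 2 ≤ e j) :
    DensityZero (Set.range e) := by
  have hcard (N : ℕ) : ((Set.range e ∩ Set.Icc 1 N).ncard : ℝ) ≤ √N := by
    have hsub : Set.range e ∩ Set.Icc 1 N ⊆ (Finset.range N.sqrt).image e := by
      rintro _ ⟨⟨j, rfl⟩, -, hjN⟩
      simpa using ⟨j, Nat.le_sqrt'.2 ((he j).trans hjN), rfl⟩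
    refine le_trans ?_ Real.nat_sqrt_le_real_sqrt
    grw [Set.ncard_le_ncard hsub, Set.ncard_coe_finset, Finset.card_image_le, Finset.card_range]
  have hlim : Tendsto (fun N : ℕ => (√N)⁻¹) atTop (𝓝 0) :=
    tendsto_inv_atTop_zero.comp (Real.tendsto_sqrt_atTop.comp tendsto_natCast_atTop_atTop)
  refine squeeze_zero (fun N => by positivity) (fun N => ?_) hlim
  rw [← Real.sqrt_div_self]
  gcongr
  exact hcard N

end DensityZero

theorem mem_statCharSet_of_norm_smul_le {a : ℕ → ℤ} {g : ℤ → ℝ} (hg : Summable g) {e : ℕ → ℕ}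
    (he : StrictMono e) {E : Set ℕ} (hE : DensityZero E) {c : ℕ → Circle1}
    (hc : ∀ n, ∀ m ∈ E, ‖a n • c m‖ ≤ g (n - e m)) {x : Circle1}
    (hx : HasSum (fun m : E => c m) x) : x ∈ statCharSet a := by
  intro ε hε
  obtain ⟨s, hs⟩ := summable_iff_vanishing_norm.1 hg (ε / 2) (half_pos hε)
  refine (hE.setOf_exists_sub_mem (fun _ => he.le_apply) s).mono fun n (hn : ε ≤ ‖a n • x‖) => ?_
  by_contra hfar
  have hpartial (t : Finset E) : ‖∑ m ∈ t, a n • c m‖ ≤ ε / 2 := by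
    have hinj : Function.Injective fun m : E => (n : ℤ) - e m := fun m m' h =>
      Subtype.ext (he.injective (by simpa using h))
    have hdisj : Disjoint (t.map ⟨_, hinj⟩) s := by
      simp only [Finset.disjoint_left, Finset.mem_map]
      rintro _ ⟨m, -, rfl⟩ hms
      exact hfar ⟨m, m.2, hms⟩
    calc ‖∑ m ∈ t, a n • c m‖ ≤ ∑ m ∈ t, g (n - e m) := norm_sum_le_of_le t fun m _ => hc n m m.2
      _ = ∑ k ∈ t.map ⟨_, hinj⟩, g k := (Finset.sum_map t ⟨_, hinj⟩ g).symm
      _ ≤ ε / 2 := (le_abs_self _).trans (hs _ hdisj).le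
  have hlim := (hx.const_smul (a n)).norm
  linarith [le_of_tendsto hlim (Eventually.of_forall hpartial)]

section PowSum

/-- The sum `∑ m ∈ A, c ^ m` of the powers of `c` with exponent in `A`, that is, the value at `c`
of the power series with coefficients in `{0, 1}` and support `A`. -/
def powSum (c : ℝ) (A : Set ℕ) : ℝ := ∑' m : A, c ^ (m : ℕ)

variable {c : ℝ}

lemma hasSum_powSum (h0 : 0 ≤ c) (h1 : c < 1) (A : Set ℕ) :
    HasSum (fun m : A => c ^ (m : ℕ)) (powSum c A) :=
  ((summable_geometric_of_lt_one h0 h1).subtype A).hasSum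

open Classical in
lemma powSum_eq_cantorFunction (c : ℝ) (A : Set ℕ) :
    powSum c A = Cardinal.cantorFunction c fun m => decide (m ∈ A) := by
  rw [powSum, tsum_subtype A fun m => c ^ m, Cardinal.cantorFunction]
  congr with m
  by_cases hm : m ∈ A <;> simp [hm]

lemma powSum_injective (h0 : 0 < c) (h1 : c < 1 / 2) : Function.Injective (powSum c) := by
  classical
  intro A B hAB
  rw [powSum_eq_cantorFunction, powSum_eq_cantorFunction] at hAB
  ext m
  simpa using congrFun (Cardinal.cantorFunction_injective h0 h1 hAB) m

lemma powSum_mem_Ico (h0 : 0 < c) (h1 : c < 1 / 2) {A : Set ℕ} (hA : 0 ∉ A) :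
    powSum c A ∈ Set.Ico 0 1 := by
  classical
  refine ⟨tsum_nonneg fun m => pow_nonneg h0.le _, ?_⟩
  calc powSum c A < powSum c {0} := by
        rw [powSum_eq_cantorFunction, powSum_eq_cantorFunction]
        exact Cardinal.increasing_cantorFunction h0 h1 (n := 0) (by simp) (by simpa) (by simp)
    _ = 1 := by simp [powSum]

lemma injOn_coe_powSum (h0 : 0 < c) (h1 : c < 1 / 2) :
    Set.InjOn (fun A => (powSum c A : Circle1)) {A | 0 ∉ A} := by
  intro A hA B hB hAB
  have hIco {S : Set ℕ} (hS : 0 ∉ S) : powSum c S ∈ Set.Ico (0 : ℝ) (0 + 1) := by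
    simpa using powSum_mem_Ico h0 h1 hS
  exact powSum_injective h0 h1 ((AddCircle.coe_eq_coe_iff_of_mem_Ico (hIco hA) (hIco hB)).1 hAB)

end PowSum

section Fibonacci

open scoped goldenRatio

lemma abs_goldenConj_lt_one : |ψ| < 1 :=
  abs_lt.2 ⟨Real.neg_one_lt_goldenConj, Real.goldenConj_neg.trans one_pos⟩

lemma goldenConj_sq_pos : 0 < ψ ^ 2 := pow_two_pos_of_ne_zero Real.goldenConj_ne_zero

lemma goldenConj_sq_lt_half : ψ ^ 2 < 1 / 2 := by
  have h5 : 2 < √5 := Real.lt_sqrt_of_sq_lt (by norm_num)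
  rw [Real.goldenConj_sq, Real.goldenConj]
  linarith

lemma goldenRatio_pow_mul_abs_goldenConj_pow {n m : ℕ} (h : n ≤ m) :
    φ ^ n * |ψ| ^ m = |ψ| ^ (m - n) := by
  have hφψ : φ * |ψ| = 1 := by
    rw [abs_of_neg Real.goldenConj_neg, mul_neg, Real.goldenRatio_mul_goldenConj, neg_neg]
  rw [← Nat.add_sub_of_le h, pow_add, ← mul_assoc, ← mul_pow, hφψ, one_pow, one_mul,
    Nat.add_sub_cancel_left]

variable {u : ℕ → ℤ}

lemma abs_le_mul_goldenRatio_pow (hu : ∀ n, u (n + 2) = u (n + 1) + u n) (n : ℕ) :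
    |(u n : ℝ)| ≤ (|(u 0 : ℝ)| + |(u 1 : ℝ)|) * φ ^ n := by
  induction n using Nat.twoStepInduction with
  | zero => simp
  | one =>
    rw [pow_one]
    have hφ : 1 ≤ φ := Real.one_lt_goldenRatio.le
    exact (le_add_of_nonneg_left (abs_nonneg _)).trans (le_mul_of_one_le_right (by positivity) hφ)
  | more n ih ih' =>
    calc |(u (n + 2) : ℝ)| ≤ |(u (n + 1) : ℝ)| + |(u n : ℝ)| := by
          rw [hu, Int.cast_add]
          exact abs_add_le _ _
      _ ≤ (|(u 0 : ℝ)| + |(u 1 : ℝ)|) * (φ ^ (n + 1) + φ ^ n) := by linarith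
      _ = (|(u 0 : ℝ)| + |(u 1 : ℝ)|) * φ ^ (n + 2) := by
          rw [← Real.goldenRatio_pow_sub_goldenRatio_pow n, add_sub_cancel]

lemma succ_sub_goldenRatio_mul (hu : ∀ n, u (n + 2) = u (n + 1) + u n) (n : ℕ) :
    (u (n + 1) : ℝ) - φ * u n = (u 1 - φ * u 0) * ψ ^ n := by
  induction n with
  | zero => simp
  | succ n ih =>
    calc (u (n + 2) : ℝ) - φ * u (n + 1) = u n + (1 - φ) * u (n + 1) := by
          rw [hu]
          push_cast
          ring
      _ = (u (n + 1) - φ * u n) * ψ := by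
          rw [Real.one_sub_goldenConj]
          linear_combination (u n : ℝ) * Real.goldenRatio_mul_goldenConj
      _ = (u 1 - φ * u 0) * ψ ^ (n + 1) := by rw [ih, pow_succ, mul_assoc]

lemma coe_mul_goldenConj_pow (hu : ∀ n, u (n + 2) = u (n + 1) + u n) (n m : ℕ) :
    ((u n * ψ ^ m : ℝ) : Circle1) = ((u 1 - φ * u 0) * (Nat.fib m * ψ ^ n) : ℝ) := by
  have hdiff : u n * ψ ^ m - (u 1 - φ * u 0) * (Nat.fib m * ψ ^ n) =
      ((u n * Nat.fib (m + 1) - u (n + 1) * Nat.fib m : ℤ) : ℝ) := by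
    rw [← Real.fib_succ_sub_goldenRatio_mul_fib m]
    push_cast
    linear_combination (Nat.fib m : ℝ) * succ_sub_goldenRatio_mul hu n
  rw [← sub_eq_zero, ← AddCircle.coe_sub, hdiff]
  exact AddCircle.coe_eq_zero_iff (1 : ℝ) |>.2 ⟨_, zsmul_one _⟩

lemma abs_mul_goldenConj_pow_le (hu : ∀ n, u (n + 2) = u (n + 1) + u n) {n m : ℕ} (h : n ≤ m) :
    |u n * ψ ^ m| ≤ (|(u 0 : ℝ)| + |(u 1 : ℝ)|) * |ψ| ^ (m - n) := by
  rw [abs_mul, abs_pow, ← goldenRatio_pow_mul_abs_goldenConj_pow h, ← mul_assoc]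
  gcongr
  exact abs_le_mul_goldenRatio_pow hu n

lemma abs_fib_mul_goldenConj_pow_le {n m : ℕ} (h : n ≤ m) :
    |Nat.fib n * ψ ^ m| ≤ |ψ| ^ (m - n) := by
  simpa using abs_mul_goldenConj_pow_le (u := fun k => Nat.fib k)
    (fun k => by rw [Nat.fib_add_two, Nat.cast_add, add_comm]) h

lemma exists_norm_smul_goldenConj_pow_le (hu : ∀ n, u (n + 2) = u (n + 1) + u n) :
    ∃ C : ℝ, ∀ n m : ℕ, ‖u n • ((ψ ^ m : ℝ) : Circle1)‖ ≤ C * |ψ| ^ ((n : ℤ) - m).natAbs := by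
  refine ⟨max (|(u 0 : ℝ)| + |(u 1 : ℝ)|) |(u 1 : ℝ) - φ * u 0|, fun n m => ?_⟩
  rw [← AddCircle.coe_zsmul, zsmul_eq_mul]
  rcases le_total n m with h | h
  · calc ‖((u n * ψ ^ m : ℝ) : Circle1)‖ ≤ |u n * ψ ^ m| := QuotientAddGroup.norm_mk_le_norm
      _ ≤ (|(u 0 : ℝ)| + |(u 1 : ℝ)|) * |ψ| ^ (m - n) := abs_mul_goldenConj_pow_le hu h
      _ ≤ _ := by
        rw [show ((n : ℤ) - m).natAbs = m - n by omega]
        gcongr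
        exact le_max_left _ _
  · rw [coe_mul_goldenConj_pow hu]
    calc ‖(((u 1 - φ * u 0) * (Nat.fib m * ψ ^ n) : ℝ) : Circle1)‖
        ≤ |(u 1 : ℝ) - φ * u 0| * |Nat.fib m * ψ ^ n| := by
          rw [← abs_mul]
          exact QuotientAddGroup.norm_mk_le_norm
      _ ≤ _ := by
        rw [show ((n : ℤ) - m).natAbs = n - m by omega]
        gcongr
        exacts [le_max_right _ _, abs_fib_mul_goldenConj_pow_le h]

theorem coe_powSum_mem_statCharSet (hu : ∀ n, u (n + 2) = u (n + 1) + u n) {A : Set ℕ}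
    (hA : DensityZero A) : (powSum (ψ ^ 2) A : Circle1) ∈ statCharSet u := by
  obtain ⟨C, hC⟩ := exists_norm_smul_goldenConj_pow_le hu
  have hsum : HasSum (fun m : A => (((ψ ^ 2) ^ (m : ℕ) : ℝ) : Circle1)) (powSum (ψ ^ 2) A) :=
    (hasSum_powSum goldenConj_sq_pos.le (goldenConj_sq_lt_half.trans one_half_lt_one) A).map
      (QuotientAddGroup.mk' (AddSubgroup.zmultiples (1 : ℝ))) (AddCircle.continuous_mk' 1)
  have hsummable := (summable_pow_natAbs (abs_nonneg ψ) abs_goldenConj_lt_one).mul_left C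
  refine mem_statCharSet_of_norm_smul_le hsummable (strictMono_mul_left_of_pos two_pos) hA
    (c := fun m => ((ψ ^ 2) ^ m : ℝ)) (fun n m _ => ?_) hsum
  rw [← pow_mul]
  exact hC n (2 * m)

end Fibonacci

theorem stmt_5_general {u : ℕ → ℤ} (hu : ∀ n, u (n + 2) = u (n + 1) + u n) :
    ¬ (statCharSet u).Countable := by
  let M : Set ℕ := Set.range fun j => (j + 1) ^ 2
  have hM_infinite : M.Infinite := Set.infinite_range_of_injective fun i j h => by simpa using h
  have hM_density : DensityZero M := densityZero_range_of_succ_sq_le fun _ => le_rfl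
  have hM_zero : 0 ∉ M := by simp [M]
  have hsub : (fun A => (powSum (Real.goldenConj ^ 2) A : Circle1)) '' 𝒫 M ⊆ statCharSet u := by
    rintro _ ⟨A, hA, rfl⟩
    exact coe_powSum_mem_statCharSet hu (hM_density.mono hA)
  have hinj : Set.InjOn (fun A => (powSum (Real.goldenConj ^ 2) A : Circle1)) (𝒫 M) :=
    (injOn_coe_powSum goldenConj_sq_pos goldenConj_sq_lt_half).mono fun A hA h => hM_zero (hA h)
  exact fun hcount => not_countable_powerset hM_infinite
    (Set.countable_of_injective_of_countable_image hinj (hcount.mono hsub))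

/-- **Corollary 2.4.** For the Fibonacci sequence `(fₙ)`, `t^s_(fₙ)(𝕋)` is uncountable. -/
theorem stmt_5 (f : ℕ → ℕ) (h1 : f 1 = 1) (h2 : f 2 = 1)
    (hrec : ∀ n, 3 ≤ n → f n = f (n - 1) + f (n - 2)) :
    ¬ (statCharSet (fun n => (f (n + 1) : ℤ))).Countable := by
  refine stmt_5_general fun n => ?_
  exact_mod_cast hrec (n + 3) (Nat.le_add_left 3 n)
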